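/- arXiv:2307.06592 — 3 statements merged into one kernel-verified Lean document; each statement's English description precedes it below -/
import Mathlib

section
/- The $k$-algebra homomorphism $\phi \colon k[T_0,\dots,T_n,U,V] \to A$ determined by $T_i \mapsto x_iy_i$, $U \mapsto x_0x_1\cdots x_n$, $V \mapsto y_0y_1\cdots y_n$ has image $A_0$ and kernel equal to the principal ideal generated by $UV - T_0T_1\cdots T_n$. Consequently $\phi$ induces a $k$-algebra isomorphism $k[T_0,\dots,T_n,U,V]/(UV - T_0T_1\cdots T_n) \cong A_0$. -/
open MvPolynomial

noncomputable section

/-- The variables of `A = k[x₀,…,xₙ,y₀,…,yₙ]`: `Sum.inl i` is `xᵢ`, `Sum.inr i` is `yᵢ`. -/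
abbrev Vars (n : ℕ) : Type := Fin (n + 1) ⊕ Fin (n + 1)

/-- The `l`-th weight of a monomial `∏ xᵢ^{cᵢ} yᵢ^{dᵢ}`, for `l ∈ {1,…,n}` encoded as
`l : Fin n` (representing the index `l+1`): it is `c_{l-1} - c_l - d_{l-1} + d_l`. -/
def wt (n : ℕ) (σ : Vars n →₀ ℕ) (l : Fin n) : ℤ :=
  (σ (Sum.inl l.castSucc) : ℤ) - (σ (Sum.inl l.succ) : ℤ)
    - (σ (Sum.inr l.castSucc) : ℤ) + (σ (Sum.inr l.succ) : ℤ)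

/-- The weight space `A_χ`. -/
def wtSpace (k : Type) [Field k] (n : ℕ) (χ : Fin n → ℤ) : Set (MvPolynomial (Vars n) k) :=
  {p | ∀ σ ∈ p.support, ∀ l : Fin n, wt n σ l = χ l}

/-- The polynomial ring `k[T₀,…,Tₙ,U,V]`: `Sum.inl i` is `Tᵢ`, `Sum.inr true` is `U`,
`Sum.inr false` is `V`. -/
abbrev TUV (k : Type) [Field k] (n : ℕ) : Type := MvPolynomial (Fin (n + 1) ⊕ Bool) k

/-- The `k`-algebra map `φ : k[T₀,…,Tₙ,U,V] → A`, `Tᵢ ↦ xᵢyᵢ`, `U ↦ x₀⋯xₙ`, `V ↦ y₀⋯yₙ`. -/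
def tuvMap (k : Type) [Field k] (n : ℕ) : TUV k n →ₐ[k] MvPolynomial (Vars n) k :=
  aeval (Sum.elim (fun i => X (Sum.inl i) * X (Sum.inr i))
    (fun b => if b then ∏ i, X (Sum.inl i) else ∏ i, X (Sum.inr i)))

/-- The element `UV - T₀T₁⋯Tₙ` of `k[T₀,…,Tₙ,U,V]`. -/
def relElt (k : Type) [Field k] (n : ℕ) : TUV k n :=
  X (Sum.inr true) * X (Sum.inr false) - ∏ i : Fin (n + 1), X (Sum.inl i)

/-
The map `φ` sends monomials to monomials, so everything is decided on exponents. Its image is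
spanned by the monomials in the image of the exponent map, which are those for which `cᵢ - dᵢ` does
not depend on `i`. Its kernel is spanned by the differences of monomials with the same image.
If two monomials have the same image and the first has the smaller exponent of `U`, they are
`m (T₀⋯Tₙ)ᶜ` and `m (UV)ᶜ` for some `m` and `c`, and `UV - T₀⋯Tₙ` divides their difference.
-/

section MonomialMap

variable {R σ τ : Type*} {e : (σ →₀ ℕ) → (τ →₀ ℕ)}

theorem range_eq_restrictSupport_of_monomial [CommSemiring R]
    {φ : MvPolynomial σ R →ₗ[R] MvPolynomial τ R}
    (hφ : ∀ a, φ (monomial a 1) = monomial (e a) 1) :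
    LinearMap.range φ = restrictSupport R (Set.range e) := by
  rw [restrictSupport_eq_span, ← Set.range_comp, LinearMap.range_eq_map,
    ← (basisMonomials σ R).span_eq, Submodule.map_span, ← Set.range_comp]
  congr 2
  ext1 a
  simp only [Function.comp_apply, coe_basisMonomials, hφ]

theorem ker_eq_span_monomial_sub_monomial [CommRing R]
    {φ : MvPolynomial σ R →ₗ[R] MvPolynomial τ R}
    (hφ : ∀ a, φ (monomial a 1) = monomial (e a) 1) :
    LinearMap.ker φ =
      Submodule.span R {p | ∃ a a', e a = e a' ∧ monomial a 1 - monomial a' 1 = p} := by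
  set K := Submodule.span R
    {p : MvPolynomial σ R | ∃ a a', e a = e a' ∧ monomial a 1 - monomial a' 1 = p}
  apply le_antisymm
  · -- Lifting each monomial in the image of `φ` to a monomial gives an inverse of `φ` modulo `K`.
    let lift : MvPolynomial τ R →ₗ[R] MvPolynomial σ R :=
      (basisMonomials τ R).constr R fun b => monomial (Function.invFun e b) 1
    have lift_monomial (b : τ →₀ ℕ) : lift (monomial b 1) = monomial (Function.invFun e b) 1 := by
      simpa only [coe_basisMonomials] using (basisMonomials τ R).constr_basis R _ b
    have mkQ_lift : K.mkQ ∘ₗ lift ∘ₗ φ = K.mkQ := by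
      refine (basisMonomials σ R).ext fun a => ?_
      simp only [LinearMap.comp_apply, coe_basisMonomials, hφ, lift_monomial]
      exact (Submodule.Quotient.eq K).2
        (Submodule.subset_span ⟨_, a, Function.invFun_eq ⟨a, rfl⟩, rfl⟩)
    calc LinearMap.ker φ ≤ LinearMap.ker (K.mkQ ∘ₗ lift ∘ₗ φ) := by
          rw [← LinearMap.comp_assoc]
          exact LinearMap.ker_le_ker_comp _ _
      _ = K := by rw [mkQ_lift, Submodule.ker_mkQ]
  · rw [Submodule.span_le]
    rintro _ ⟨a, a', h, rfl⟩
    simp only [SetLike.mem_coe, LinearMap.mem_ker, map_sub, hφ, h, sub_self]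

end MonomialMap

section Exponents

/-- The exponents of the monomials `∏ xᵢ^{cᵢ} yᵢ^{dᵢ}` of weight zero, that is, those for which
`cᵢ - dᵢ` does not depend on `i`; the equation is rearranged to avoid subtraction in `ℕ`. -/
def balancedExponents (ι : Type*) : Set (ι ⊕ ι →₀ ℕ) :=
  {c | ∀ i j, c (Sum.inl i) + c (Sum.inr j) = c (Sum.inl j) + c (Sum.inr i)}

variable {ι : Type*}

/-- The map on exponents of monomials induced by `Tᵢ ↦ xᵢyᵢ`, `U ↦ ∏ xᵢ`, `V ↦ ∏ yᵢ`, with the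
variables encoded as in `tuvMap`. -/
def toricExponent [Finite ι] (a : ι ⊕ Bool →₀ ℕ) : ι ⊕ ι →₀ ℕ :=
  Finsupp.equivFunOnFinite.symm (Sum.elim (fun i => a (Sum.inl i) + a (Sum.inr true))
    (fun i => a (Sum.inl i) + a (Sum.inr false)))

@[simp]
theorem toricExponent_inl [Finite ι] (a : ι ⊕ Bool →₀ ℕ) (i : ι) :
    toricExponent a (Sum.inl i) = a (Sum.inl i) + a (Sum.inr true) :=
  rfl

@[simp]
theorem toricExponent_inr [Finite ι] (a : ι ⊕ Bool →₀ ℕ) (i : ι) :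
    toricExponent a (Sum.inr i) = a (Sum.inl i) + a (Sum.inr false) :=
  rfl

theorem range_toricExponent [Finite ι] [Nonempty ι] :
    Set.range (toricExponent (ι := ι)) = balancedExponents ι := by
  ext c
  constructor
  · rintro ⟨a, rfl⟩ i j
    simp only [toricExponent_inl, toricExponent_inr]
    ring
  · intro hc
    obtain ⟨j⟩ := ‹Nonempty ι›
    -- The largest possible power of each `Tᵢ`, so that at most one of `U` and `V` remains.
    refine ⟨Finsupp.equivFunOnFinite.symm (Sum.elim
      (fun i => min (c (Sum.inl i)) (c (Sum.inr i)))
      (fun b => if b then c (Sum.inl j) - c (Sum.inr j) else c (Sum.inr j) - c (Sum.inl j))), ?_⟩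
    ext (i | i) <;>
    · have := hc i j
      simp only [toricExponent_inl, toricExponent_inr, Finsupp.equivFunOnFinite_symm_apply_apply,
        Sum.elim_inl, Sum.elim_inr, if_true, Bool.false_eq_true, if_false]
      omega

theorem exists_eq_add_nsmul_of_toricExponent_eq [Fintype ι] [Nonempty ι]
    {a a' : ι ⊕ Bool →₀ ℕ} (h : toricExponent a = toricExponent a')
    (hU : a (Sum.inr true) ≤ a' (Sum.inr true)) :
    ∃ b : ι ⊕ Bool →₀ ℕ, ∃ c : ℕ,
      a = b + c • ∑ i : ι, Finsupp.single (Sum.inl i) 1 ∧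
      a' = b + c • (Finsupp.single (Sum.inr true) 1 + Finsupp.single (Sum.inr false) 1) := by
  classical
  obtain ⟨c, hc⟩ := Nat.exists_eq_add_of_le hU
  have hT (i : ι) : a (Sum.inl i) = a' (Sum.inl i) + c := by
    have := DFunLike.congr_fun h (Sum.inl i)
    simp only [toricExponent_inl] at this
    omega
  have hV : a' (Sum.inr false) = a (Sum.inr false) + c := by
    obtain ⟨j⟩ := ‹Nonempty ι›
    have := DFunLike.congr_fun h (Sum.inr j)
    simp only [toricExponent_inr, hT j] at this
    omega
  refine ⟨a ⊓ a', c, ?_, ?_⟩ <;> ext (i | _ | _) <;>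
    simp [Finsupp.single_apply, hc, hT, hV]

end Exponents

section Toric

variable (R ι : Type*) [Fintype ι]

/-- The homomorphism `Tᵢ ↦ xᵢyᵢ`, `U ↦ ∏ xᵢ`, `V ↦ ∏ yᵢ` over an arbitrary finite index set `ι`,
generalizing `tuvMap`, with the variables encoded in the same way. -/
def toricHom [CommSemiring R] : MvPolynomial (ι ⊕ Bool) R →ₐ[R] MvPolynomial (ι ⊕ ι) R :=
  aeval (Sum.elim (fun i => X (Sum.inl i) * X (Sum.inr i))
    (fun b => if b then ∏ i, X (Sum.inl i) else ∏ i, X (Sum.inr i)))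

/-- The relation `UV - ∏ Tᵢ` generating the kernel of `toricHom`, generalizing `relElt`. -/
def toricRel [CommRing R] : MvPolynomial (ι ⊕ Bool) R :=
  X (Sum.inr true) * X (Sum.inr false) - ∏ i : ι, X (Sum.inl i)

variable {ι}

theorem toricHom_monomial [CommSemiring R] (a : ι ⊕ Bool →₀ ℕ) :
    toricHom R ι (monomial a 1) = monomial (toricExponent a) 1 := by
  rw [toricHom, aeval_monomial, map_one, one_mul, monomial_eq, C_1, one_mul,
    Finsupp.prod_fintype _ _ fun _ => pow_zero _, Finsupp.prod_fintype _ _ fun _ => pow_zero _]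
  simp only [Fintype.prod_sum_type, Fintype.prod_bool, Sum.elim_inl, Sum.elim_inr, if_true,
    Bool.false_eq_true, if_false, toricExponent_inl, toricExponent_inr, pow_add, mul_pow,
    Finset.prod_mul_distrib, Finset.prod_pow]
  ring

theorem toricRel_eq_monomial_sub_monomial [CommRing R] :
    toricRel R ι =
      monomial (Finsupp.single (Sum.inr true) 1 + Finsupp.single (Sum.inr false) 1) 1 -
        monomial (∑ i : ι, Finsupp.single (Sum.inl i) 1) 1 := by
  simp only [toricRel, X, monomial_sum_one, monomial_mul, one_mul]

theorem toricRel_dvd_monomial_sub_monomial [CommRing R] [Nonempty ι] {a a' : ι ⊕ Bool →₀ ℕ}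
    (h : toricExponent a = toricExponent a') :
    toricRel R ι ∣ monomial a 1 - monomial a' 1 := by
  wlog hU : a (Sum.inr true) ≤ a' (Sum.inr true) generalizing a a'
  · exact dvd_sub_comm.1 (this h.symm (le_of_not_ge hU))
  obtain ⟨b, c, rfl, rfl⟩ := exists_eq_add_nsmul_of_toricExponent_eq h hU
  have monomial_add_nsmul (t : ι ⊕ Bool →₀ ℕ) :
      (monomial (b + c • t) 1 : MvPolynomial (ι ⊕ Bool) R) = monomial b 1 * monomial t 1 ^ c := by
    rw [monomial_pow, monomial_mul, one_pow, one_mul]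
  rw [dvd_sub_comm, monomial_add_nsmul, monomial_add_nsmul, ← mul_sub,
    toricRel_eq_monomial_sub_monomial]
  exact (sub_dvd_pow_sub_pow _ _ c).mul_left _

variable (ι)

theorem mem_range_toricHom [CommSemiring R] [Nonempty ι] (p : MvPolynomial (ι ⊕ ι) R) :
    p ∈ (toricHom R ι).range ↔ p ∈ restrictSupport R (balancedExponents ι) := by
  rw [← range_toricExponent,
    ← range_eq_restrictSupport_of_monomial (φ := (toricHom R ι).toLinearMap) (toricHom_monomial R)]
  rfl

theorem ker_toricHom [CommRing R] [Nonempty ι] :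
    RingHom.ker (toricHom R ι).toRingHom = Ideal.span {toricRel R ι} := by
  apply le_antisymm
  · suffices LinearMap.ker (toricHom R ι).toLinearMap ≤
        (Ideal.span {toricRel R ι}).restrictScalars R from this
    rw [ker_eq_span_monomial_sub_monomial (toricHom_monomial R), Submodule.span_le]
    rintro _ ⟨a, a', h, rfl⟩
    exact Ideal.mem_span_singleton.2 (toricRel_dvd_monomial_sub_monomial R h)
  · rw [Ideal.span_singleton_le_iff_mem]
    change toricHom R ι (toricRel R ι) = 0
    simp [toricHom, toricRel, Finset.prod_mul_distrib]

theorem stmt1_general [CommRing R] [Nonempty ι] :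
    (∀ p, p ∈ (toricHom R ι).range ↔ p ∈ restrictSupport R (balancedExponents ι)) ∧
    RingHom.ker (toricHom R ι).toRingHom = Ideal.span {toricRel R ι} ∧
    Nonempty ((MvPolynomial (ι ⊕ Bool) R ⧸ Ideal.span {toricRel R ι}) ≃ₐ[R]
      (toricHom R ι).range) :=
  ⟨mem_range_toricHom R ι, ker_toricHom R ι,
    ⟨(Ideal.quotientEquivAlgOfEq R (ker_toricHom R ι).symm).trans
      (Ideal.quotientKerEquivRange (toricHom R ι))⟩⟩

end Toric

theorem forall_wt_eq_zero_iff_mem_balancedExponents {n : ℕ} {c : Vars n →₀ ℕ} :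
    (∀ l, wt n c l = 0) ↔ c ∈ balancedExponents (Fin (n + 1)) := by
  constructor
  · intro hc
    have sub_eq_zero_sub (i : Fin (n + 1)) :
        (c (Sum.inl i) : ℤ) - c (Sum.inr i) = c (Sum.inl 0) - c (Sum.inr 0) := by
      induction i using Fin.induction with
      | zero => rfl
      | succ l ih =>
        have := hc l
        simp only [wt] at this
        omega
    intro i j
    have := sub_eq_zero_sub i
    have := sub_eq_zero_sub j
    omega
  · intro hc l
    have := hc l.castSucc l.succ
    simp only [wt]
    omega

theorem mem_wtSpace_zero_iff {k : Type} [Field k] {n : ℕ} {p : MvPolynomial (Vars n) k} :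
    p ∈ wtSpace k n 0 ↔ p ∈ restrictSupport k (balancedExponents (Fin (n + 1))) :=
  forall₂_congr fun _ _ => forall_wt_eq_zero_iff_mem_balancedExponents

/-- The map `φ` has image `A₀` and kernel the principal ideal `(UV - T₀⋯Tₙ)`; consequently
it induces a `k`-algebra isomorphism `k[T,U,V]/(UV - T₀⋯Tₙ) ≅ A₀` (the image of `φ`). -/
theorem stmt1 (k : Type) [Field k] (n : ℕ) (hn : 1 ≤ n) :
    (∀ p, p ∈ (tuvMap k n).range ↔ p ∈ wtSpace k n 0) ∧
    RingHom.ker (tuvMap k n).toRingHom = Ideal.span {relElt k n} ∧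
    Nonempty ((TUV k n ⧸ Ideal.span {relElt k n}) ≃ₐ[k] (tuvMap k n).range) := by
  simpa only [mem_wtSpace_zero_iff] using! stmt1_general k (Fin (n + 1))
end
end

section
/- Fix $i$ with $1 \le i \le n$ and set $\sigma_i = x_0\cdots x_{i-1}$, $\tau_i = y_i\cdots y_n$. Multiplication by $x_ix_{i+1}\cdots x_n$ defines an injective $A_0$-module homomorphism $A_{\chi_i} \to A_0$ whose image is the ideal $A_0\,u + A_0\,(t_it_{i+1}\cdots t_n)$ of $A_0$ (it sends $\sigma_i \mapsto u$ and $\tau_i \mapsto t_i\cdots t_n$). Likewise, multiplication by $y_0y_1\cdots y_{i-1}$ defines an injective $A_0$-module homomorphism $A_{\chi_i} \to A_0$ whose image is the ideal $A_0\,v + A_0\,(t_0t_1\cdots t_{i-1})$. In particular, $A_{\chi_i}$ is isomorphic as an $A_0$-module to an ideal of $A_0$ generated by two elements, one of which is $u$ (resp. $v$) and the other a product of the $t_l$. -/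
/-!
Write `eⱼ` for the exponent of `xⱼ` minus the exponent of `yⱼ` in a monomial. The `l`-th weight is
`e_{l-1} - e_l`, so for a monomial of weight `χᵢ` the sequence `e` is constant on `{0,…,i-1}`,
constant on `{i,…,n}`, and drops by one in between. If `e₀ ≥ 1` the monomial is divisible by `σᵢ`;
otherwise `eⱼ ≤ -1` for all `j ≥ i` and it is divisible by `τᵢ`. Cofactors have weight `0`, hence
`A_{χᵢ} = A₀ σᵢ + A₀ τᵢ`, and multiplying by a product of variables of weight `-χᵢ` moves this
identity into `A₀`.
-/

open MvPolynomial

noncomputable section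

/-- The standard basis vector `χ_{i+1} ∈ ℤⁿ`, for `i : Fin n` representing the paper's
index `i+1 ∈ {1,…,n}`. -/
def chi (n : ℕ) (i : Fin n) : Fin n → ℤ := fun l => if l = i then 1 else 0

/-- `σ_{i+1} = x₀x₁⋯xᵢ`. -/
def sigmaElt (k : Type) [Field k] (n : ℕ) (i : Fin n) : MvPolynomial (Vars n) k :=
  ∏ j ∈ Finset.univ.filter (fun j : Fin (n + 1) => (j : ℕ) < (i : ℕ) + 1), X (Sum.inl j)

/-- `τ_{i+1} = y_{i+1}⋯yₙ`. -/
def tauElt (k : Type) [Field k] (n : ℕ) (i : Fin n) : MvPolynomial (Vars n) k :=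
  ∏ j ∈ Finset.univ.filter (fun j : Fin (n + 1) => (i : ℕ) + 1 ≤ (j : ℕ)), X (Sum.inr j)

/-- `u = x₀⋯xₙ`. -/
def uElt (k : Type) [Field k] (n : ℕ) : MvPolynomial (Vars n) k := ∏ i, X (Sum.inl i)

/-- `v = y₀⋯yₙ`. -/
def vElt (k : Type) [Field k] (n : ℕ) : MvPolynomial (Vars n) k := ∏ i, X (Sum.inr i)

theorem prod_Iic_mul_prod_Ioi {ι M : Type*} [Fintype ι] [LinearOrder ι] [LocallyFiniteOrderBot ι]
    [LocallyFiniteOrderTop ι] [CommMonoid M] (a : ι) (f : ι → M) :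
    (∏ j ∈ Finset.Iic a, f j) * ∏ j ∈ Finset.Ioi a, f j = ∏ j, f j := by
  have compl_Iic : (Finset.Iic a)ᶜ = Finset.Ioi a := by ext; simp
  rw [← compl_Iic, Finset.prod_mul_prod_compl]

section GradedPieces

variable {R : Type*} [CommSemiring R]

theorem mem_mul_span_pair {A : Type*} [Semiring A] [Algebra R A]
    {N : Submodule R A} {a b r : A} :
    r ∈ N * Submodule.span R {a, b} ↔ ∃ p₁ ∈ N, ∃ p₂ ∈ N, r = p₁ * a + p₂ * b := by
  simp only [Submodule.span_insert, Submodule.mul_sup, Submodule.mem_sup,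
    Submodule.mem_mul_span_singleton, exists_exists_and_eq_and, eq_comm (a := r)]

theorem setOf_mul_mem_mul_span_pair {A : Type*} [CommSemiring A] [Algebra R A]
    (N : Submodule R A) (P a b : A) :
    {r | ∃ q ∈ N * Submodule.span R {a, b}, r = P * q} =
      {r | ∃ p₁ ∈ N, ∃ p₂ ∈ N, r = p₁ * (P * a) + p₂ * (P * b)} := by
  ext r
  simp only [Set.mem_ofPred_eq, mem_mul_span_pair]
  constructor
  · rintro ⟨_, ⟨p₁, h₁, p₂, h₂, rfl⟩, rfl⟩
    exact ⟨p₁, h₁, p₂, h₂, by ring⟩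
  · rintro ⟨p₁, h₁, p₂, h₂, rfl⟩
    exact ⟨_, ⟨p₁, h₁, p₂, h₂, rfl⟩, by ring⟩

theorem weightedHomogeneousSubmodule_eq_mul_span_monomial {σ M : Type*} [AddCommMonoid M]
    [IsLeftCancelAdd M] {w : σ → M} {m : M} {S : Set (σ →₀ ℕ)}
    (weight_eq : ∀ a ∈ S, Finsupp.weight w a = m)
    (exists_le : ∀ d, Finsupp.weight w d = m → ∃ a ∈ S, a ≤ d) :
    weightedHomogeneousSubmodule R w m =
      weightedHomogeneousSubmodule R w 0 * Submodule.span R ((monomial · 1) '' S) := by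
  apply le_antisymm
  · intro q hq
    rw [q.as_sum]
    refine Submodule.sum_mem _ fun d hd ↦ ?_
    have weight_d : Finsupp.weight w d = m := hq (mem_support_iff.1 hd)
    obtain ⟨a, ha, had⟩ := exists_le d weight_d
    obtain ⟨r, rfl⟩ := exists_add_of_le had
    have weight_r : Finsupp.weight w r = 0 := by
      simpa only [map_add, weight_eq a ha, add_eq_left] using weight_d
    rw [← mul_one (coeff (a + r) q), add_comm a r, ← monomial_mul]
    exact Submodule.mul_mem_mul (isWeightedHomogeneous_monomial w r _ weight_r)
      (Submodule.subset_span ⟨a, ha, rfl⟩)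
  · have span_le : Submodule.span R ((monomial · 1) '' S) ≤ weightedHomogeneousSubmodule R w m := by
      rw [Submodule.span_le]
      rintro _ ⟨a, ha, rfl⟩
      exact isWeightedHomogeneous_monomial w a 1 (weight_eq a ha)
    calc
      _ ≤ weightedHomogeneousSubmodule R w 0 * weightedHomogeneousSubmodule R w m :=
        mul_le_mul_right span_le _
      _ ≤ weightedHomogeneousSubmodule R w (0 + m) := weightedHomogeneousSubmodule_mul w 0 m
      _ = weightedHomogeneousSubmodule R w m := by rw [zero_add]

end GradedPieces

section SquarefreeMonomials

variable {σ : Type*}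

/-- The exponent vector of the squarefree monomial `∏ v ∈ s, X v`. -/
def squarefreeExponent (s : Finset σ) : σ →₀ ℕ := ∑ v ∈ s, Finsupp.single v 1

theorem squarefreeExponent_apply [DecidableEq σ] (s : Finset σ) (v : σ) :
    squarefreeExponent s v = if v ∈ s then 1 else 0 := by
  simp [squarefreeExponent, Finsupp.finsetSum_apply, Finsupp.single_apply]

theorem squarefreeExponent_le_iff {s : Finset σ} {d : σ →₀ ℕ} :
    squarefreeExponent s ≤ d ↔ ∀ v ∈ s, 1 ≤ d v := by
  classical
  refine forall_congr' fun v ↦ ?_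
  rw [squarefreeExponent_apply]
  split_ifs with hv <;> simp [hv]

theorem prod_X_eq_monomial_squarefreeExponent {R ι : Type*} [CommSemiring R] (s : Finset ι)
    (f : ι ↪ σ) :
    ∏ j ∈ s, (X (f j) : MvPolynomial σ R) = monomial (squarefreeExponent (s.map f)) 1 := by
  rw [squarefreeExponent, monomial_sum_one, Finset.prod_map]
  rfl

end SquarefreeMonomials

section Weights

variable {n : ℕ}

/-- The weight in `ℤⁿ` of a variable of `A`, which turns `wt` into Mathlib's `Finsupp.weight`. -/
def varWeight (n : ℕ) (v : Vars n) : Fin n → ℤ := wt n (Finsupp.single v 1)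

theorem weight_varWeight (m : Vars n →₀ ℕ) : Finsupp.weight (varWeight n) m = wt n m := by
  let wtHom : (Vars n →₀ ℕ) →+ (Fin n → ℤ) :=
    { toFun := wt n
      map_zero' := by ext l; simp [wt]
      map_add' := fun a b ↦ by
        ext l
        simp only [wt, Finsupp.add_apply, Pi.add_apply, Nat.cast_add]
        ring }
  suffices Finsupp.weight (varWeight n) = wtHom from DFunLike.congr_fun this m
  refine Finsupp.addHom_ext' fun v ↦ AddMonoidHom.ext_nat ?_
  simp [wtHom, Finsupp.weight_single, varWeight]

/-- The exponent of `xⱼ` minus the exponent of `yⱼ`. -/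
def excess (m : Vars n →₀ ℕ) (j : Fin (n + 1)) : ℤ := m (Sum.inl j) - m (Sum.inr j)

theorem wt_eq_excess_sub_excess (m : Vars n →₀ ℕ) (l : Fin n) :
    wt n m l = excess m l.castSucc - excess m l.succ := by
  simp only [wt, excess]
  ring

theorem excess_squarefreeExponent_inl (s : Finset (Fin (n + 1))) (j : Fin (n + 1)) :
    excess (squarefreeExponent (s.map .inl)) j = if j ∈ s then 1 else 0 := by
  simp [excess, squarefreeExponent_apply]

theorem excess_squarefreeExponent_inr (s : Finset (Fin (n + 1))) (j : Fin (n + 1)) :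
    excess (squarefreeExponent (s.map .inr)) j = -if j ∈ s then 1 else 0 := by
  simp [excess, squarefreeExponent_apply]

theorem wt_squarefreeExponent_inr (s : Finset (Fin (n + 1))) :
    wt n (squarefreeExponent (s.map .inr)) = -wt n (squarefreeExponent (s.map .inl)) := by
  ext l
  simp only [wt_eq_excess_sub_excess, excess_squarefreeExponent_inl, excess_squarefreeExponent_inr,
    Pi.neg_apply]
  ring

theorem wt_squarefreeExponent_Iic_inl (i : Fin n) :
    wt n (squarefreeExponent ((Finset.Iic i.castSucc).map .inl)) = chi n i := by
  ext l
  simp only [wt_eq_excess_sub_excess, excess_squarefreeExponent_inl, Finset.mem_Iic, chi,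
    Fin.le_def, Fin.ext_iff, Fin.val_castSucc, Fin.val_succ]
  grind

theorem wt_squarefreeExponent_Ioi_inl (i : Fin n) :
    wt n (squarefreeExponent ((Finset.Ioi i.castSucc).map .inl)) = -chi n i := by
  ext l
  simp only [wt_eq_excess_sub_excess, excess_squarefreeExponent_inl, Finset.mem_Ioi, chi,
    Fin.lt_def, Fin.ext_iff, Fin.val_castSucc, Fin.val_succ, Pi.neg_apply]
  grind

theorem excess_eq_of_wt_eq_chi {i : Fin n} {m : Vars n →₀ ℕ} (hm : wt n m = chi n i)
    (j : Fin (n + 1)) : excess m j = excess m 0 - if j ≤ i.castSucc then 0 else 1 := by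
  induction j using Fin.induction with
  | zero => simp
  | succ l ih =>
    have drop : excess m l.castSucc - excess m l.succ = if l = i then 1 else 0 := by
      rw [← wt_eq_excess_sub_excess, hm, chi]
    simp only [Fin.le_def, Fin.ext_iff, Fin.val_castSucc, Fin.val_succ] at *
    grind

theorem squarefreeExponent_le_of_wt_eq_chi {i : Fin n} {m : Vars n →₀ ℕ} (hm : wt n m = chi n i) :
    squarefreeExponent ((Finset.Iic i.castSucc).map .inl) ≤ m ∨
      squarefreeExponent ((Finset.Ioi i.castSucc).map .inr) ≤ m := by
  have excess_eq := excess_eq_of_wt_eq_chi hm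
  simp only [squarefreeExponent_le_iff, Finset.forall_mem_map, Finset.mem_Iic, Finset.mem_Ioi]
  rcases lt_or_ge 0 (excess m 0) with pos | nonpos
  · refine .inl fun j hj ↦ ?_
    have : excess m j = excess m 0 := by simp [excess_eq j, hj]
    simp only [excess, Function.Embedding.inl_apply] at *
    omega
  · refine .inr fun j hj ↦ ?_
    have : excess m j = excess m 0 - 1 := by simp [excess_eq j, hj.not_ge]
    simp only [excess, Function.Embedding.inr_apply] at *
    omega

end Weights

section WeightSpaces

variable (R : Type*) [CommSemiring R] {n : ℕ}

/-- The weight space `A_χ` as a submodule of `A`, over an arbitrary commutative semiring of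
coefficients. -/
abbrev weightSpace (n : ℕ) (χ : Fin n → ℤ) : Submodule R (MvPolynomial (Vars n) R) :=
  weightedHomogeneousSubmodule R (varWeight n) χ

theorem coe_weightSpace (k : Type) [Field k] (χ : Fin n → ℤ) :
    (weightSpace k n χ : Set (MvPolynomial (Vars n) k)) = wtSpace k n χ := by
  ext p
  simp [IsWeightedHomogeneous, wtSpace, weight_varWeight, funext_iff]

variable {R}

theorem prod_X_mem_weightSpace {s : Finset (Fin (n + 1))} {f : Fin (n + 1) ↪ Vars n}
    {χ : Fin n → ℤ} (hs : wt n (squarefreeExponent (s.map f)) = χ) :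
    ∏ j ∈ s, X (f j) ∈ weightSpace R n χ := by
  rw [prod_X_eq_monomial_squarefreeExponent]
  exact isWeightedHomogeneous_monomial _ _ _ ((weight_varWeight _).trans hs)

theorem mul_mem_weightSpace_zero {χ : Fin n → ℤ} {p q : MvPolynomial (Vars n) R}
    (hp : p ∈ weightSpace R n (-χ)) (hq : q ∈ weightSpace R n χ) : p * q ∈ weightSpace R n 0 := by
  simpa using IsWeightedHomogeneous.mul hp hq

theorem weightSpace_chi_eq_mul_span (i : Fin n) :
    weightSpace R n (chi n i) = weightSpace R n 0 * Submodule.span R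
      {∏ j ∈ Finset.Iic i.castSucc, X (Sum.inl j), ∏ j ∈ Finset.Ioi i.castSucc, X (Sum.inr j)} := by
  have weight_tau : wt n (squarefreeExponent ((Finset.Ioi i.castSucc).map .inr)) = chi n i := by
    rw [wt_squarefreeExponent_inr, wt_squarefreeExponent_Ioi_inl, neg_neg]
  rw [weightSpace, weightedHomogeneousSubmodule_eq_mul_span_monomial
    (S := {squarefreeExponent ((Finset.Iic i.castSucc).map .inl),
      squarefreeExponent ((Finset.Ioi i.castSucc).map .inr)})]
  · simp only [Set.image_pair, ← prod_X_eq_monomial_squarefreeExponent,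
      Function.Embedding.inl_apply, Function.Embedding.inr_apply]
  · simp [weight_varWeight, wt_squarefreeExponent_Iic_inl, weight_tau]
  · simpa [weight_varWeight] using fun d ↦ squarefreeExponent_le_of_wt_eq_chi

end WeightSpaces

theorem filter_val_lt_succ_eq_Iic {n : ℕ} (i : Fin n) :
    Finset.univ.filter (fun j : Fin (n + 1) ↦ (j : ℕ) < (i : ℕ) + 1) = Finset.Iic i.castSucc := by
  ext j
  simp [Fin.le_def]

theorem filter_succ_le_val_eq_Ioi {n : ℕ} (i : Fin n) :
    Finset.univ.filter (fun j : Fin (n + 1) ↦ (i : ℕ) + 1 ≤ (j : ℕ)) = Finset.Ioi i.castSucc := by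
  ext j
  simp [Fin.lt_def]

theorem stmt4_general (R : Type*) [CommSemiring R] {n : ℕ} (i : Fin n) :
    let A := weightSpace R n
    let lo := Finset.Iic i.castSucc
    let hi := Finset.Ioi i.castSucc
    let x : Fin (n + 1) → MvPolynomial (Vars n) R := fun j ↦ X (Sum.inl j)
    let y : Fin (n + 1) → MvPolynomial (Vars n) R := fun j ↦ X (Sum.inr j)
    (∀ q ∈ A (chi n i), (∏ j ∈ hi, x j) * q ∈ A 0) ∧
    Set.InjOn (fun q ↦ (∏ j ∈ hi, x j) * q) (A (chi n i)) ∧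
    (∏ j ∈ hi, x j) * ∏ j ∈ lo, x j = ∏ j, x j ∧
    (∏ j ∈ hi, x j) * ∏ j ∈ hi, y j = ∏ j ∈ hi, (x j * y j) ∧
    {r | ∃ q ∈ A (chi n i), r = (∏ j ∈ hi, x j) * q} =
      {r | ∃ p₁ ∈ A 0, ∃ p₂ ∈ A 0, r = p₁ * ∏ j, x j + p₂ * ∏ j ∈ hi, (x j * y j)} ∧
    (∀ q ∈ A (chi n i), (∏ j ∈ lo, y j) * q ∈ A 0) ∧
    Set.InjOn (fun q ↦ (∏ j ∈ lo, y j) * q) (A (chi n i)) ∧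
    (∏ j ∈ lo, y j) * ∏ j ∈ hi, y j = ∏ j, y j ∧
    (∏ j ∈ lo, y j) * ∏ j ∈ lo, x j = ∏ j ∈ lo, (x j * y j) ∧
    {r | ∃ q ∈ A (chi n i), r = (∏ j ∈ lo, y j) * q} =
      {r | ∃ p₁ ∈ A 0, ∃ p₂ ∈ A 0, r = p₁ * ∏ j, y j + p₂ * ∏ j ∈ lo, (x j * y j)} := by
  intro A lo hi x y
  have x_hi_mem : ∏ j ∈ hi, x j ∈ A (-chi n i) :=
    prod_X_mem_weightSpace (f := .inl) (wt_squarefreeExponent_Ioi_inl i)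
  have y_lo_mem : ∏ j ∈ lo, y j ∈ A (-chi n i) :=
    prod_X_mem_weightSpace (f := .inr)
      ((wt_squarefreeExponent_inr _).trans (by rw [wt_squarefreeExponent_Iic_inl]))
  have mul_injective (s : Finset (Fin (n + 1))) (f : Fin (n + 1) → Vars n) :
      Function.Injective fun q : MvPolynomial (Vars n) R ↦ (∏ j ∈ s, X (f j)) * q :=
    (IsRegular.prod fun _ _ ↦ isRegular_X).left
  have u_eq : (∏ j ∈ hi, x j) * ∏ j ∈ lo, x j = ∏ j, x j := by
    rw [mul_comm, prod_Iic_mul_prod_Ioi]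
  have t_hi_eq : (∏ j ∈ hi, x j) * ∏ j ∈ hi, y j = ∏ j ∈ hi, (x j * y j) :=
    Finset.prod_mul_distrib.symm
  have v_eq : (∏ j ∈ lo, y j) * ∏ j ∈ hi, y j = ∏ j, y j := prod_Iic_mul_prod_Ioi _ _
  have t_lo_eq : (∏ j ∈ lo, y j) * ∏ j ∈ lo, x j = ∏ j ∈ lo, (x j * y j) := by
    rw [mul_comm, Finset.prod_mul_distrib]
  have generators : A (chi n i) = A 0 * Submodule.span R {∏ j ∈ lo, x j, ∏ j ∈ hi, y j} :=
    weightSpace_chi_eq_mul_span i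
  refine ⟨fun _ ↦ mul_mem_weightSpace_zero x_hi_mem, (mul_injective hi _).injOn, u_eq, t_hi_eq, ?_,
    fun _ ↦ mul_mem_weightSpace_zero y_lo_mem, (mul_injective lo _).injOn, v_eq, t_lo_eq, ?_⟩
  · rw [generators, setOf_mul_mem_mul_span_pair, u_eq, t_hi_eq]
  · rw [generators, Set.pair_comm, setOf_mul_mem_mul_span_pair, v_eq, t_lo_eq]

/-- For a fixed `i ∈ {1,…,n}` (encoded as `i : Fin n` representing the paper's `i+1`):
multiplication by `xᵢ⋯xₙ` maps `A_{χᵢ}` into `A₀`, injectively and `A₀`-linearly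
(automatic, as it is multiplication in a commutative domain), sending
`σᵢ ↦ u` and `τᵢ ↦ tᵢ⋯tₙ`, with image the ideal `A₀·u + A₀·(tᵢ⋯tₙ)`; likewise,
multiplication by `y₀⋯y_{i-1}` maps `A_{χᵢ}` injectively into `A₀`, sending
`τᵢ ↦ v` and `σᵢ ↦ t₀⋯t_{i-1}`, with image the ideal `A₀·v + A₀·(t₀⋯t_{i-1})`. -/
theorem stmt4 (k : Type) [Field k] (n : ℕ) (hn : 1 ≤ n) (i : Fin n) :
    -- multiplication by `xᵢ⋯xₙ` (paper indices), i.e. `x_{i+1}⋯xₙ` in our encoding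
    (∀ q ∈ wtSpace k n (chi n i),
      (∏ j ∈ Finset.univ.filter (fun j : Fin (n + 1) => (i : ℕ) + 1 ≤ (j : ℕ)),
        X (Sum.inl j)) * q ∈ wtSpace k n 0) ∧
    Set.InjOn
      (fun q => (∏ j ∈ Finset.univ.filter (fun j : Fin (n + 1) => (i : ℕ) + 1 ≤ (j : ℕ)),
        X (Sum.inl j)) * q)
      (wtSpace k n (chi n i)) ∧
    (∏ j ∈ Finset.univ.filter (fun j : Fin (n + 1) => (i : ℕ) + 1 ≤ (j : ℕ)),
        X (Sum.inl j)) * sigmaElt k n i = uElt k n ∧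
    (∏ j ∈ Finset.univ.filter (fun j : Fin (n + 1) => (i : ℕ) + 1 ≤ (j : ℕ)),
        X (Sum.inl j)) * tauElt k n i =
      ∏ j ∈ Finset.univ.filter (fun j : Fin (n + 1) => (i : ℕ) + 1 ≤ (j : ℕ)),
        (X (Sum.inl j) * X (Sum.inr j)) ∧
    {r : MvPolynomial (Vars n) k | ∃ q ∈ wtSpace k n (chi n i),
        r = (∏ j ∈ Finset.univ.filter (fun j : Fin (n + 1) => (i : ℕ) + 1 ≤ (j : ℕ)),
          X (Sum.inl j)) * q} =
      {r | ∃ p₁ ∈ wtSpace k n 0, ∃ p₂ ∈ wtSpace k n 0,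
        r = p₁ * uElt k n +
          p₂ * ∏ j ∈ Finset.univ.filter (fun j : Fin (n + 1) => (i : ℕ) + 1 ≤ (j : ℕ)),
            (X (Sum.inl j) * X (Sum.inr j))} ∧
    -- multiplication by `y₀⋯y_{i-1}` (paper indices), i.e. `y₀⋯yᵢ` in our encoding
    (∀ q ∈ wtSpace k n (chi n i),
      (∏ j ∈ Finset.univ.filter (fun j : Fin (n + 1) => (j : ℕ) < (i : ℕ) + 1),
        X (Sum.inr j)) * q ∈ wtSpace k n 0) ∧
    Set.InjOn
      (fun q => (∏ j ∈ Finset.univ.filter (fun j : Fin (n + 1) => (j : ℕ) < (i : ℕ) + 1),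
        X (Sum.inr j)) * q)
      (wtSpace k n (chi n i)) ∧
    (∏ j ∈ Finset.univ.filter (fun j : Fin (n + 1) => (j : ℕ) < (i : ℕ) + 1),
        X (Sum.inr j)) * tauElt k n i = vElt k n ∧
    (∏ j ∈ Finset.univ.filter (fun j : Fin (n + 1) => (j : ℕ) < (i : ℕ) + 1),
        X (Sum.inr j)) * sigmaElt k n i =
      ∏ j ∈ Finset.univ.filter (fun j : Fin (n + 1) => (j : ℕ) < (i : ℕ) + 1),
        (X (Sum.inl j) * X (Sum.inr j)) ∧
    {r : MvPolynomial (Vars n) k | ∃ q ∈ wtSpace k n (chi n i),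
        r = (∏ j ∈ Finset.univ.filter (fun j : Fin (n + 1) => (j : ℕ) < (i : ℕ) + 1),
          X (Sum.inr j)) * q} =
      {r | ∃ p₁ ∈ wtSpace k n 0, ∃ p₂ ∈ wtSpace k n 0,
        r = p₁ * vElt k n +
          p₂ * ∏ j ∈ Finset.univ.filter (fun j : Fin (n + 1) => (j : ℕ) < (i : ℕ) + 1),
            (X (Sum.inl j) * X (Sum.inr j))} := by
  simpa only [← coe_weightSpace, SetLike.mem_coe, sigmaElt, tauElt, uElt, vElt,
    filter_val_lt_succ_eq_Iic, filter_succ_le_val_eq_Ioi] using stmt4_general k i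
end
end

section
/- The center of the $k$-algebra $M$ is exactly the set of scalar matrices $\{p\,I_{n+1} : p \in A_0\}$. In particular, by the presentation of the invariant ring, the center of $M$ is isomorphic as a $k$-algebra to $k[T_0,\dots,T_n,U,V]/(UV - T_0T_1\cdots T_n)$. -/
open MvPolynomial

noncomputable section

/-- The vector `χ_l ∈ ℤⁿ` for `l ∈ {0,…,n}`: the `l`-th standard basis vector if
`1 ≤ l`, and `0` if `l = 0`. -/
def stdChi (n : ℕ) (l : Fin (n + 1)) : Fin n → ℤ :=
  fun m => if (m : ℕ) + 1 = (l : ℕ) then 1 else 0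

/-- The matrix model `M`: the set of `(n+1)×(n+1)` matrices over `A` whose `(j,i)` entry
lies in `A_{χ_j - χ_i}`. -/
def Mset (k : Type) [Field k] (n : ℕ) :
    Set (Matrix (Fin (n + 1)) (Fin (n + 1)) (MvPolynomial (Vars n) k)) :=
  {m | ∀ i j : Fin (n + 1), m j i ∈ wtSpace k n (stdChi n j - stdChi n i)}

/-- The center of `M`, as a subset of `Mat_{n+1}(A)`. -/
def centerSet (k : Type) [Field k] (n : ℕ) :
    Set (Matrix (Fin (n + 1)) (Fin (n + 1)) (MvPolynomial (Vars n) k)) :=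
  {m | m ∈ Mset k n ∧ ∀ m' ∈ Mset k n, m * m' = m' * m}

/-! Testing a central matrix against the diagonal idempotents makes it diagonal, and testing it
against `x₀⋯x_{j-1} E_{j0}`, which lies in `M` and has a regular entry, makes its diagonal entries
agree. For the presentation of `A₀`, note that a monomial has weight zero exactly when the
difference of its `xᵢ`- and `yᵢ`-exponents does not depend on `i`. These monomials are the images of
the monomials in `Tᵢ`, `U`, `V` under `Tᵢ ↦ xᵢyᵢ`, `U ↦ ∏ xᵢ`, `V ↦ ∏ yᵢ`. Modulo `UV - ∏ Tᵢ` every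
monomial reduces to one that is not divisible by `UV`, and such a monomial can be recovered from
its image. -/

section CenterOfEntrywise

variable {ι A : Type*} [DecidableEq ι] [CommSemiring A]

/-- The matrices whose `(j, i)` entry lies in `V j i`, where no compatibility of the sets `V j i`
with multiplication is required. -/
def entrywise (V : ι → ι → Set A) : Set (Matrix ι ι A) :=
  {m | ∀ j i, m j i ∈ V j i}

variable {V : ι → ι → Set A}

theorem single_mem_entrywise (zero_mem : ∀ j i, 0 ∈ V j i) {j i : ι} {a : A} (ha : a ∈ V j i) :
    Matrix.single j i a ∈ entrywise V := by
  intro b c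
  rw [Matrix.single_apply]
  split_ifs with h
  · obtain ⟨rfl, rfl⟩ := h
    exact ha
  · exact zero_mem b c

theorem smul_one_mem_entrywise (zero_mem : ∀ j i, 0 ∈ V j i) {p : A} (hp : ∀ i, p ∈ V i i) :
    p • (1 : Matrix ι ι A) ∈ entrywise V := by
  intro j i
  obtain rfl | hji := eq_or_ne j i
  · simpa using hp j
  · simpa [Matrix.one_apply_ne hji] using zero_mem j i

variable [Fintype ι]

theorem apply_self_eq_of_commute_single {m : Matrix ι ι A} {j i : ι} {f : A} (hf : IsLeftRegular f)
    (hm : Commute (Matrix.single j i f) m) : m j j = m i i := by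
  have hji : f * m i i = m j j * f := by simpa using congrFun₂ hm.eq j i
  exact (hf (hji.trans (mul_comm _ _))).symm

theorem eq_smul_one_of_commute_single {m : Matrix ι ι A} (i₀ : ι) {f : ι → A}
    (hf : ∀ j, IsLeftRegular (f j)) (hdiag : ∀ j, Commute (Matrix.single j j 1) m)
    (hcol : ∀ j, Commute (Matrix.single j i₀ (f j)) m) : m = m i₀ i₀ • 1 := by
  ext j i
  obtain rfl | hji := eq_or_ne j i
  · simp [apply_self_eq_of_commute_single (hf j) (hcol j)]
  · simp [Matrix.one_apply_ne hji, Matrix.row_eq_zero_of_commute_single (hdiag j) hji.symm]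

theorem entrywise_inter_centralizer_eq (i₀ : ι) (zero_mem : ∀ j i, 0 ∈ V j i)
    (one_mem : ∀ i, 1 ∈ V i i) (exists_regular : ∀ j, ∃ f ∈ V j i₀, IsLeftRegular f) :
    entrywise V ∩ (entrywise V).centralizer = {m | ∃ p, (∀ i, p ∈ V i i) ∧ m = p • 1} := by
  ext m
  constructor
  · rintro ⟨hmV, hm⟩
    choose f hfV hf using exists_regular
    have hscalar : m = m i₀ i₀ • 1 := eq_smul_one_of_commute_single i₀ hf
      (fun j => hm _ (single_mem_entrywise zero_mem (one_mem j)))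
      (fun j => hm _ (single_mem_entrywise zero_mem (hfV j)))
    have hentry (i : ι) : m i i = m i₀ i₀ := by simpa using congrFun₂ hscalar i i
    exact ⟨m i₀ i₀, fun i => hentry i ▸ hmV i i, hscalar⟩
  · rintro ⟨p, hp, rfl⟩
    exact ⟨smul_one_mem_entrywise zero_mem hp, fun m' _ => by simp⟩

end CenterOfEntrywise

section MonomialMaps

variable {R σ τ : Type*}

theorem range_eq_restrictSupport_of_map_monomial [CommSemiring R]
    {f : MvPolynomial σ R →ₗ[R] MvPolynomial τ R} {e : (σ →₀ ℕ) → (τ →₀ ℕ)}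
    (hf : ∀ s, f (monomial s 1) = monomial (e s) 1) :
    LinearMap.range f = restrictSupport R (Set.range e) := by
  rw [LinearMap.range_eq_map, ← restrictSupport_univ, restrictSupport_eq_span,
    restrictSupport_eq_span, Submodule.map_span, Set.image_image]
  simp only [hf, Set.image_univ, ← Set.range_comp, Function.comp_def]

theorem mem_of_map_eq_zero_of_map_monomial [CommRing R]
    {f : MvPolynomial σ R →ₗ[R] MvPolynomial τ R} {e : (σ →₀ ℕ) → (τ →₀ ℕ)}
    (hf : ∀ s, f (monomial s 1) = monomial (e s) 1) {I : Ideal (MvPolynomial σ R)}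
    {g : (τ →₀ ℕ) → (σ →₀ ℕ)}
    (hg : ∀ s, Ideal.Quotient.mk I (monomial (g (e s)) 1) = Ideal.Quotient.mk I (monomial s 1))
    {p : MvPolynomial σ R} (hp : f p = 0) : p ∈ I := by
  let L : MvPolynomial τ R →ₗ[R] MvPolynomial σ R ⧸ I :=
    (basisMonomials τ R).constr R fun t => Ideal.Quotient.mk I (monomial (g t) 1)
  have hL (t : τ →₀ ℕ) : L (monomial t 1) = Ideal.Quotient.mk I (monomial (g t) 1) := by
    simpa only [coe_basisMonomials] using (basisMonomials τ R).constr_basis R _ t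
  have hLf : L ∘ₗ f = (Ideal.Quotient.mkₐ R I).toLinearMap :=
    (basisMonomials σ R).ext fun s => by simp [hf, hL, hg]
  have hLfp : L (f p) = Ideal.Quotient.mk I p := LinearMap.congr_fun hLf p
  rw [← Ideal.Quotient.eq_zero_iff_mem, ← hLfp, hp, map_zero]

theorem monomial_one_sum_eq_prod [CommSemiring R] [Fintype σ] [Fintype τ] (s : σ ⊕ τ →₀ ℕ) :
    (monomial s 1 : MvPolynomial (σ ⊕ τ) R) =
      (∏ i, X (Sum.inl i) ^ s (Sum.inl i)) * ∏ i, X (Sum.inr i) ^ s (Sum.inr i) := by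
  rw [monomial_eq, Finsupp.prod_fintype _ _ (by simp), Fintype.prod_sum_type, C_1, one_mul]

end MonomialMaps

theorem pow_mul_pow_eq_mul_pow_min {G : Type*} [CommMonoid G] (u v : G) (a b : ℕ) :
    u ^ a * v ^ b = (u * v) ^ min a b * (u ^ (a - b) * v ^ (b - a)) := by
  rw [mul_pow, mul_mul_mul_comm, ← pow_add, ← pow_add]
  congr 2 <;> omega

section BalancedExponents

variable {ι : Type*}

/-- Exponents of monomials in `xᵢ` (`Sum.inl i`) and `yᵢ` (`Sum.inr i`) for which the exponent of
`xᵢ` minus that of `yᵢ` is independent of `i`; stated without subtraction. -/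
def IsBalanced (s : ι ⊕ ι →₀ ℕ) : Prop :=
  ∀ i j, s (Sum.inl i) + s (Sum.inr j) = s (Sum.inl j) + s (Sum.inr i)

variable [Finite ι]

/-- The exponent of the image of the monomial in `Tᵢ`, `U`, `V` with exponent `s` under `Tᵢ ↦ xᵢyᵢ`,
`U ↦ ∏ xᵢ`, `V ↦ ∏ yᵢ`. As in `TUV`, `Sum.inr true` is `U` and `Sum.inr false` is `V`. -/
def invariantExponent (s : ι ⊕ Bool →₀ ℕ) : ι ⊕ ι →₀ ℕ :=
  Finsupp.equivFunOnFinite.symm <| Sum.elim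
    (fun i => s (Sum.inl i) + s (Sum.inr true)) (fun i => s (Sum.inl i) + s (Sum.inr false))

/-- For balanced `s`, the exponent of the only monomial in `Tᵢ`, `U`, `V` that is not divisible by
`UV` and maps to the monomial with exponent `s`. The index `i₀` is used to read off the common
difference of the `xᵢ`- and `yᵢ`-exponents; one of the truncated subtractions is always `0`. -/
def reducedExponent (i₀ : ι) (s : ι ⊕ ι →₀ ℕ) : ι ⊕ Bool →₀ ℕ :=
  Finsupp.equivFunOnFinite.symm <| Sum.elim
    (fun i => min (s (Sum.inl i)) (s (Sum.inr i)))
    (fun b => if b then s (Sum.inl i₀) - s (Sum.inr i₀) else s (Sum.inr i₀) - s (Sum.inl i₀))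

theorem isBalanced_invariantExponent (s : ι ⊕ Bool →₀ ℕ) : IsBalanced (invariantExponent s) := by
  intro i j
  simp only [invariantExponent, Finsupp.equivFunOnFinite_symm_apply_apply, Sum.elim_inl,
    Sum.elim_inr]
  ring

theorem invariantExponent_reducedExponent (i₀ : ι) {s : ι ⊕ ι →₀ ℕ} (hs : IsBalanced s) :
    invariantExponent (reducedExponent i₀ s) = s := by
  ext (i | i) <;>
  · have hi := hs i i₀
    simp only [invariantExponent, reducedExponent, Finsupp.equivFunOnFinite_symm_apply_apply,
      Sum.elim_inl, Sum.elim_inr, if_true, Bool.false_eq_true, if_false]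
    omega

theorem range_invariantExponent [Nonempty ι] :
    Set.range (invariantExponent (ι := ι)) = {s | IsBalanced s} := by
  obtain ⟨i₀⟩ := ‹Nonempty ι›
  refine Set.Subset.antisymm (Set.range_subset_iff.2 isBalanced_invariantExponent) fun s hs => ?_
  exact ⟨reducedExponent i₀ s, invariantExponent_reducedExponent i₀ hs⟩

end BalancedExponents

section InvariantMap

variable (R ι : Type*) [CommSemiring R] [Fintype ι]

/-- The homomorphism `R[T, U, V] → R[x, y]`, `Tᵢ ↦ xᵢyᵢ`, `U ↦ ∏ xᵢ`, `V ↦ ∏ yᵢ`, whose image is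
spanned by the balanced monomials. -/
def invariantMap : MvPolynomial (ι ⊕ Bool) R →ₐ[R] MvPolynomial (ι ⊕ ι) R :=
  aeval <| Sum.elim (fun i => X (Sum.inl i) * X (Sum.inr i))
    (fun b => if b then ∏ i, X (Sum.inl i) else ∏ i, X (Sum.inr i))

variable {ι}

theorem invariantMap_monomial (s : ι ⊕ Bool →₀ ℕ) :
    invariantMap R ι (monomial s 1) = monomial (invariantExponent s) 1 := by
  rw [monomial_one_sum_eq_prod, monomial_one_sum_eq_prod]
  simp only [invariantMap, invariantExponent, map_mul, map_prod, map_pow, aeval_X, Sum.elim_inl,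
    Sum.elim_inr, Fintype.prod_bool, if_true, Bool.false_eq_true, if_false,
    Finsupp.equivFunOnFinite_symm_apply_apply, pow_add, mul_pow, Finset.prod_mul_distrib,
    Finset.prod_pow]
  ring

theorem range_invariantMap [Nonempty ι] :
    Set.range (invariantMap R ι) = restrictSupport R {s : ι ⊕ ι →₀ ℕ | IsBalanced s} := by
  have hrange := range_eq_restrictSupport_of_map_monomial
    (f := (invariantMap R ι).toLinearMap) (invariantMap_monomial R)
  rw [← range_invariantExponent, ← hrange]
  rfl

end InvariantMap

section InvariantPresentation

variable (R ι : Type*) [CommRing R] [Fintype ι]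

/-- The relation `UV - ∏ Tᵢ`; `relElt` is the case of a field and `ι = Fin (n + 1)`. -/
def uvRelation : MvPolynomial (ι ⊕ Bool) R :=
  X (Sum.inr true) * X (Sum.inr false) - ∏ i, X (Sum.inl i)

theorem invariantMap_uvRelation : invariantMap R ι (uvRelation R ι) = 0 := by
  simp [invariantMap, uvRelation, Finset.prod_mul_distrib]

variable {ι} in
theorem mk_monomial_reducedExponent (i₀ : ι) (s : ι ⊕ Bool →₀ ℕ) :
    Ideal.Quotient.mk (Ideal.span {uvRelation R ι})
        (monomial (reducedExponent i₀ (invariantExponent s)) 1) =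
      Ideal.Quotient.mk (Ideal.span {uvRelation R ι}) (monomial s 1) := by
  set π := Ideal.Quotient.mk (Ideal.span {uvRelation R ι})
  have hrel : π (X (Sum.inr true)) * π (X (Sum.inr false)) = ∏ i, π (X (Sum.inl i)) := by
    rw [← map_mul, ← map_prod]
    exact Ideal.Quotient.eq.2 (Ideal.mem_span_singleton_self _)
  have hT (i : ι) : reducedExponent i₀ (invariantExponent s) (Sum.inl i) =
      s (Sum.inl i) + min (s (Sum.inr true)) (s (Sum.inr false)) := by
    simp [reducedExponent, invariantExponent, min_add_add_left]
  have hU : reducedExponent i₀ (invariantExponent s) (Sum.inr true) =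
      s (Sum.inr true) - s (Sum.inr false) := by
    simp [reducedExponent, invariantExponent, Nat.add_sub_add_left]
  have hV : reducedExponent i₀ (invariantExponent s) (Sum.inr false) =
      s (Sum.inr false) - s (Sum.inr true) := by
    simp [reducedExponent, invariantExponent, Nat.add_sub_add_left]
  simp only [monomial_one_sum_eq_prod, Fintype.prod_bool, map_mul, map_prod, map_pow, hT, hU, hV]
  rw [pow_mul_pow_eq_mul_pow_min _ _ (s (Sum.inr true)) (s (Sum.inr false)), hrel]
  simp only [pow_add, Finset.prod_mul_distrib, Finset.prod_pow, mul_assoc]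

theorem ker_invariantMap [Nonempty ι] :
    RingHom.ker (invariantMap R ι) = Ideal.span {uvRelation R ι} := by
  obtain ⟨i₀⟩ := ‹Nonempty ι›
  refine le_antisymm (fun p hp => ?_) ?_
  · exact mem_of_map_eq_zero_of_map_monomial (f := (invariantMap R ι).toLinearMap)
      (invariantMap_monomial R) (mk_monomial_reducedExponent R i₀) hp
  · rw [Ideal.span_singleton_le_iff_mem]
    exact invariantMap_uvRelation R ι

/-- The presentation map `R[T, U, V]/(UV - ∏ Tᵢ) → R[x, y]` of the invariant ring. -/
def invariantQuotientMap :
    (MvPolynomial (ι ⊕ Bool) R ⧸ Ideal.span {uvRelation R ι}) →ₐ[R] MvPolynomial (ι ⊕ ι) R :=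
  Ideal.Quotient.liftₐ _ (invariantMap R ι) fun _ hp =>
    (Ideal.span_singleton_le_iff_mem (RingHom.ker (invariantMap R ι))).2
      (invariantMap_uvRelation R ι) hp

theorem invariantQuotientMap_injective [Nonempty ι] :
    Function.Injective (invariantQuotientMap R ι) :=
  RingHom.lift_injective_of_ker_le_ideal _ _ (ker_invariantMap R ι).le

theorem range_invariantQuotientMap [Nonempty ι] :
    Set.range (invariantQuotientMap R ι) = restrictSupport R {s : ι ⊕ ι →₀ ℕ | IsBalanced s} := by
  rw [← range_invariantMap, ← Ideal.Quotient.mk_surjective.range_comp]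
  rfl

end InvariantPresentation

section MatrixModel

variable (R : Type*) [CommSemiring R] (n : ℕ)

/-- The weight space `A_χ` over a commutative semiring, as a submodule. -/
def weightSubmodule (χ : Fin n → ℤ) : Submodule R (MvPolynomial (Vars n) R) :=
  restrictSupport R {σ | wt n σ = χ}

/-- The matrix model `M` over a commutative semiring, as a set of matrices like `Mset`; its center
is its intersection with its centralizer in the full matrix algebra. -/
def matrixModel : Set (Matrix (Fin (n + 1)) (Fin (n + 1)) (MvPolynomial (Vars n) R)) :=
  entrywise fun j i => weightSubmodule R n (stdChi n j - stdChi n i)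

variable {n}

theorem wt_eq_zero_iff_isBalanced {σ : Vars n →₀ ℕ} : wt n σ = 0 ↔ IsBalanced σ := by
  constructor
  · intro hσ
    have hdiff (i : Fin (n + 1)) :
        σ (Sum.inl i) + σ (Sum.inr 0) = σ (Sum.inl 0) + σ (Sum.inr i) := by
      induction i using Fin.induction with
      | zero => rfl
      | succ i ih =>
        have hi := congrFun hσ i
        simp only [wt, Pi.zero_apply] at hi
        omega
    intro i j
    have hi := hdiff i
    have hj := hdiff j
    omega
  · intro hσ
    ext l
    have hl := hσ l.castSucc l.succ
    simp only [wt, Pi.zero_apply]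
    omega

theorem weightSubmodule_zero :
    weightSubmodule R n 0 = restrictSupport R {σ | IsBalanced σ} := by
  simp only [weightSubmodule, wt_eq_zero_iff_isBalanced]

theorem one_mem_weightSubmodule_zero : (1 : MvPolynomial (Vars n) R) ∈ weightSubmodule R n 0 := by
  rw [weightSubmodule, one_def, monomial_mem_restrictSupport]
  exact .inl (funext fun l => by simp [wt])

/-- The exponent of `x₀x₁⋯x_{j-1}`. -/
def prefixExponent (j : Fin (n + 1)) : Vars n →₀ ℕ :=
  Finsupp.equivFunOnFinite.symm (Sum.elim (fun i => if i < j then 1 else 0) 0)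

theorem wt_prefixExponent (j : Fin (n + 1)) : wt n (prefixExponent j) = stdChi n j := by
  ext l
  simp only [wt, prefixExponent, stdChi, Finsupp.equivFunOnFinite_symm_apply_apply, Sum.elim_inl,
    Sum.elim_inr, Pi.zero_apply, Fin.lt_def, Fin.val_castSucc, Fin.val_succ]
  split_ifs <;> omega

theorem stdChi_zero : stdChi n 0 = 0 := by
  ext l
  simp [stdChi]

theorem monomial_prefixExponent_mem (j : Fin (n + 1)) :
    monomial (prefixExponent j) 1 ∈ weightSubmodule R n (stdChi n j - stdChi n 0) := by
  rw [weightSubmodule, monomial_mem_restrictSupport, stdChi_zero, sub_zero]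
  exact .inl (wt_prefixExponent j)

theorem matrixModel_inter_centralizer :
    matrixModel R n ∩ (matrixModel R n).centralizer =
      {m | ∃ p ∈ weightSubmodule R n 0, m = p • 1} := by
  rw [matrixModel, entrywise_inter_centralizer_eq 0]
  · simp
  · exact fun _ _ => zero_mem _
  · simpa using one_mem_weightSubmodule_zero R
  · exact fun j => ⟨_, monomial_prefixExponent_mem R j, isRegular_one.monomial.left⟩

end MatrixModel

theorem coe_weightSubmodule (k : Type) [Field k] {n : ℕ} (χ : Fin n → ℤ) :
    (weightSubmodule k n χ : Set (MvPolynomial (Vars n) k)) = wtSpace k n χ := by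
  ext p
  exact forall₂_congr fun σ _ => funext_iff

theorem centerSet_eq_matrixModel_inter_centralizer (k : Type) [Field k] (n : ℕ) :
    centerSet k n = matrixModel k n ∩ (matrixModel k n).centralizer := by
  have hM : Mset k n = matrixModel k n := by
    ext m
    simp only [Mset, matrixModel, entrywise, coe_weightSubmodule]
    exact forall_comm
  ext m
  simp only [centerSet, hM, Set.mem_inter_iff, Set.mem_centralizer_iff, Set.mem_ofPred_eq,
    eq_comm (a := m * _)]

theorem stmt9_general (R : Type*) [CommRing R] (n : ℕ) :
    matrixModel R n ∩ (matrixModel R n).centralizer =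
      {m | ∃ p ∈ weightSubmodule R n 0, m = p • 1} ∧
    ∃ φ : (MvPolynomial (Fin (n + 1) ⊕ Bool) R ⧸ Ideal.span {uvRelation R (Fin (n + 1))}) →ₐ[R]
        Matrix (Fin (n + 1)) (Fin (n + 1)) (MvPolynomial (Vars n) R),
      Function.Injective φ ∧
        Set.range φ = matrixModel R n ∩ (matrixModel R n).centralizer := by
  refine ⟨matrixModel_inter_centralizer R,
    (Matrix.scalarAlgHom _ R).comp (invariantQuotientMap R (Fin (n + 1))), ?_, ?_⟩
  · exact fun _ _ h => invariantQuotientMap_injective R _ (Matrix.scalar_inj.1 h)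
  · rw [AlgHom.coe_comp, Set.range_comp, range_invariantQuotientMap, ← weightSubmodule_zero,
      matrixModel_inter_centralizer]
    ext m
    simp [Matrix.smul_one_eq_diagonal, eq_comm]

/-- The center of `M` is exactly the set of scalar matrices `p·I` with `p ∈ A₀`;
in particular it is isomorphic as a `k`-algebra to `k[T₀,…,Tₙ,U,V]/(UV - T₀⋯Tₙ)`
(there is an injective ring homomorphism from this quotient onto the center). -/
theorem stmt9 (k : Type) [Field k] (n : ℕ) (hn : 1 ≤ n) :
    centerSet k n =
      {m : Matrix (Fin (n + 1)) (Fin (n + 1)) (MvPolynomial (Vars n) k) |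
        ∃ p ∈ wtSpace k n 0, m = p • 1} ∧
    ∃ φ : (TUV k n ⧸ Ideal.span {relElt k n}) →+*
        Matrix (Fin (n + 1)) (Fin (n + 1)) (MvPolynomial (Vars n) k),
      Function.Injective φ ∧ Set.range φ = centerSet k n := by
  simp only [centerSet_eq_matrixModel_inter_centralizer, ← coe_weightSubmodule]
  exact (stmt9_general k n).imp_right fun ⟨φ, hφ⟩ => ⟨φ.toRingHom, hφ⟩
end
end
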